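/- arXiv:math/0609455 — 2 statements merged into one kernel-verified Lean document; each statement's English description precedes it below -/
import Mathlib

section
/- Under the Hamiltonian flow setup, for every t, every (z,ζ), and every index i = 1, …, n, the following identity holds: ∂_{ζ_i} [ ∫_0^t ( a(z_r, ζ_r) − ζ_r · (d_ζ a)(z_r, ζ_r) ) dr ] + ζ_t · ∂_{ζ_i} z_t = 0, where (z_r, ζ_r) = χ_r(z,ζ) and the ζ_i-derivative is taken in the initial datum ζ. -/
open MeasureTheory Complex Real
open scoped ENNReal NNReal RealInnerProductSpace

noncomputable section

/-- Euclidean space `ℝ^n`. -/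
abbrev En (n : ℕ) := EuclideanSpace ℝ (Fin n)

/-- The `i`-th coordinate vector of `ℝ^n`. -/
def ev {n : ℕ} (i : Fin n) : En n := EuclideanSpace.single i (1 : ℝ)

/-- The Hamiltonian `a(z,ζ) = Σᵢⱼ aⁱʲ(z) ζᵢ ζⱼ` on phase space `ℝ^n × ℝ^n`. -/
def ham {n : ℕ} (a : Fin n → Fin n → En n → ℝ) (w : En n × En n) : ℝ :=
  ∑ i, ∑ j, a i j w.1 * w.2 i * w.2 j

/-- The Hamiltonian vector field `(d_ζ a, −d_z a)` of `ham a`. -/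
def hamField {n : ℕ} (a : Fin n → Fin n → En n → ℝ) (w : En n × En n) :
    En n × En n :=
  (gradient (fun ζ => ham a (w.1, ζ)) w.2, -gradient (fun z => ham a (z, w.2)) w.1)

/-- `χ` is the flow of Hamilton's equations `∂ₜ z = d_ζ a`, `∂ₜ ζ = −d_z a`
with `χ 0 = id`. -/
def IsHamFlow {n : ℕ} (a : Fin n → Fin n → En n → ℝ)
    (χ : ℝ → En n × En n → En n × En n) : Prop :=
  (∀ w, χ 0 w = w) ∧ ∀ w t, HasDerivAt (fun s => χ s w) (hamField a (χ t w)) t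

/-- The coefficient hypotheses of the Hamiltonian flow setup: `aⁱʲ` smooth symmetric,
`‖aⁱʲ − δᵢⱼ‖_{C²} ≤ 1`, and `|∂^α aⁱʲ| ≤ C_α μ^{max(0,|α|−2)/2}` for every order `|α|`. -/
def HamSetup {n : ℕ} (μ : ℝ) (Cα : ℕ → ℝ) (a : Fin n → Fin n → En n → ℝ) : Prop :=
  (∀ i j, ContDiff ℝ (⊤ : ℕ∞) (a i j)) ∧ (∀ i j, a i j = a j i) ∧
    (∀ i j x, |a i j x - (if i = j then (1 : ℝ) else 0)| + ‖fderiv ℝ (a i j) x‖ +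
      ‖iteratedFDeriv ℝ 2 (a i j) x‖ ≤ 1) ∧
    ∀ i j (k : ℕ) x, ‖iteratedFDeriv ℝ k (a i j) x‖ ≤
      Cα k * μ ^ (max 0 ((k : ℝ) - 2) / 2)

/-- The symbol `σ(z,ζ) = a(z,ζ) − ζ · (d_ζ a)(z,ζ)`. -/
def hamSigma {n : ℕ} (a : Fin n → Fin n → En n → ℝ) (w : En n × En n) : ℝ :=
  ham a w - ⟪w.2, gradient (fun ζ => ham a (w.1, ζ)) w.2⟫

section AbstractFlow

variable {E : Type*} [NormedAddCommGroup E] [NormedSpace ℝ E]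
  {G : Type*} [NormedAddCommGroup G] [NormedSpace ℝ G]

theorem aux_lip [ProperSpace E] {f : E → G} (hf : ContDiff ℝ 1 f) (R : ℝ) :
    ∃ K : ℝ≥0, LipschitzOnWith K f (Metric.closedBall 0 R) :=
  hf.contDiffOn.exists_lipschitzOnWith one_ne_zero (convex_closedBall 0 R)
    (isCompact_closedBall 0 R)

theorem aux_quad [ProperSpace E] {f : E → G} (hf : ContDiff ℝ 2 f) (R : ℝ) :
    ∃ M : ℝ, 0 ≤ M ∧ ∀ x ∈ Metric.closedBall (0 : E) R, ∀ y ∈ Metric.closedBall (0 : E) R,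
      ‖f y - f x - fderiv ℝ f x (y - x)‖ ≤ M * ‖y - x‖ ^ 2 := by
  have h1 : ContDiff ℝ 1 (fderiv ℝ f) := hf.fderiv_right (by norm_num)
  obtain ⟨K, hK⟩ := aux_lip h1 R
  refine ⟨K, K.2, fun x hx y hy => ?_⟩
  have hseg : segment ℝ x y ⊆ Metric.closedBall (0 : E) R :=
    (convex_closedBall 0 R).segment_subset hx hy
  have := (convex_segment x y).norm_image_sub_le_of_norm_fderiv_le' (𝕜 := ℝ) (f := f)
    (φ := fderiv ℝ f x) (C := K * ‖y - x‖) (x := x) (y := y)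
    (fun u _ => (hf.differentiable (by norm_num)).differentiableAt)
    (fun u hu => ?_) (left_mem_segment ℝ x y) (right_mem_segment ℝ x y)
  · calc _ ≤ _ := this
      _ = _ := by ring
  · have h2 := hK.dist_le_mul u (hseg hu) x hx
    rw [dist_eq_norm, dist_eq_norm] at h2
    refine h2.trans (mul_le_mul_of_nonneg_left ?_ K.2)
    obtain ⟨θ, hθ, rfl⟩ := (segment_eq_image' ℝ x y ▸ hu)
    simp only [add_sub_cancel_left, norm_smul, Real.norm_eq_abs, abs_of_nonneg hθ.1]
    exact mul_le_of_le_one_left (norm_nonneg _) hθ.2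

theorem aux_cont {g : ℝ → ℝ} (hg : Continuous g) {T c : ℝ}
    (h : ∀ r ∈ Set.Icc 0 T, (∀ s ∈ Set.Ico 0 r, g s < c) → g r < c) :
    ∀ r ∈ Set.Icc 0 T, g r < c := by
  by_contra! hcon
  obtain ⟨r, hr, hgr⟩ := hcon
  have hc : IsCompact (Set.Icc 0 T ∩ g ⁻¹' Set.Ici c) :=
    isCompact_Icc.inter_right (isClosed_Ici.preimage hg)
  obtain ⟨m, hm, hmin⟩ := hc.exists_isLeast ⟨r, hr, hgr⟩
  refine absurd (h m hm.1 fun s hs => ?_) (not_lt.2 hm.2)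
  by_contra! hs'
  exact absurd (hmin ⟨⟨hs.1, hs.2.le.trans hm.1.2⟩, hs'⟩) (not_le.2 hs.2)

theorem aux_stab [ProperSpace E] {F : E → E} (hF : ContDiff ℝ 1 F) {x : ℝ → E}
    (hx : ∀ t, HasDerivAt x (F (x t)) t) (T : ℝ) :
    ∃ R C ε : ℝ, 0 ≤ C ∧ 0 < ε ∧ ∀ y : ℝ → E, (∀ t, HasDerivAt y (F (y t)) t) →
      ‖y 0 - x 0‖ < ε → ∀ r ∈ Set.Icc 0 T, ‖x r‖ ≤ R ∧ ‖y r‖ ≤ R ∧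
        ‖y r - x r‖ ≤ C * ‖y 0 - x 0‖ := by
  have hxc : Continuous x := continuous_iff_continuousAt.2 fun t => (hx t).continuousAt
  obtain ⟨R, hR⟩ := (isCompact_Icc (a := (0 : ℝ)) (b := T)).exists_bound_of_continuousOn
    hxc.continuousOn
  obtain ⟨K, hK⟩ := aux_lip hF (R + 1)
  have hpos := Real.exp_pos (K * T)
  refine ⟨R + 1, Real.exp (K * T), (Real.exp (K * T))⁻¹, hpos.le, by positivity,
    fun y hy h0 => ?_⟩
  have hyc : Continuous y := continuous_iff_continuousAt.2 fun t => (hy t).continuousAt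
  have hsmall : Real.exp (K * T) * ‖y 0 - x 0‖ < 1 := by
    have := mul_lt_mul_of_pos_left h0 hpos
    rwa [mul_inv_cancel₀ hpos.ne'] at this
  have key : ∀ r ∈ Set.Icc 0 T, (∀ s ∈ Set.Ico 0 r, ‖y s - x s‖ < 1) →
      ‖y r - x r‖ ≤ Real.exp (K * T) * ‖y 0 - x 0‖ := by
    intro r hr hs
    have := dist_le_of_trajectories_ODE_of_mem (v := fun _ => F) (K := K)
      (s := fun _ => Metric.closedBall 0 (R + 1)) (f := y) (g := x) (a := 0) (b := r)
      (δ := ‖y 0 - x 0‖)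
      (fun _ _ => hK) hyc.continuousOn (fun t _ => (hy t).hasDerivWithinAt)
      (fun t ht => ?_) hxc.continuousOn (fun t _ => (hx t).hasDerivWithinAt)
      (fun t ht => ?_) (dist_eq_norm _ _).le r ⟨hr.1, le_rfl⟩
    · rw [dist_eq_norm] at this
      refine this.trans ?_
      rw [mul_comm]
      gcongr
      linarith [hr.2]
    · have h1 := hs t ht
      have h2 := hR t ⟨ht.1, ht.2.le.trans hr.2⟩
      rw [mem_closedBall_zero_iff]
      have := norm_add_le (y t - x t) (x t)
      rw [sub_add_cancel] at this
      linarith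
    · have h2 := hR t ⟨ht.1, ht.2.le.trans hr.2⟩
      rw [mem_closedBall_zero_iff]
      linarith
  have hlt := aux_cont (g := fun r => ‖y r - x r‖) (by fun_prop) (T := T) (c := 1)
    (fun r hr hs => (key r hr hs).trans_lt hsmall)
  intro r hr
  have h2 := hR r hr
  have h3 := norm_add_le (y r - x r) (x r)
  rw [sub_add_cancel] at h3
  refine ⟨by linarith, by linarith [hlt r hr], key r hr fun s hs =>
    hlt s ⟨hs.1, hs.2.le.trans hr.2⟩⟩

theorem aux_neg {F : E → E} {x : ℝ → E}
    (hx : ∀ t, HasDerivAt x (F (x t)) t) (t : ℝ) :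
    HasDerivAt (fun s => x (-s)) ((fun w => -F w) (x (-t))) t := by
  have := (hx (-t)).scomp t (hasDerivAt_neg t)
  simpa using! this

theorem aux_stab2 [ProperSpace E] {F : E → E} (hF : ContDiff ℝ 1 F) {x : ℝ → E}
    (hx : ∀ t, HasDerivAt x (F (x t)) t) (T : ℝ) :
    ∃ R C ε : ℝ, 0 ≤ C ∧ 0 < ε ∧ ∀ y : ℝ → E, (∀ t, HasDerivAt y (F (y t)) t) →
      ‖y 0 - x 0‖ < ε → ∀ r ∈ Set.Icc (-T) T, ‖x r‖ ≤ R ∧ ‖y r‖ ≤ R ∧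
        ‖y r - x r‖ ≤ C * ‖y 0 - x 0‖ := by
  obtain ⟨R, C, ε, hC, hε, h⟩ := aux_stab hF hx T
  obtain ⟨R', C', ε', hC', hε', h'⟩ := aux_stab (F := fun w => -F w) hF.neg (aux_neg hx) T
  refine ⟨max R R', max C C', min ε ε', le_max_of_le_left hC, lt_min hε hε', ?_⟩
  intro y hy h0 r hr
  rcases le_total 0 r with h1 | h1
  · obtain ⟨a, b, c⟩ := h y hy (h0.trans_le (min_le_left _ _)) r ⟨h1, hr.2⟩
    exact ⟨a.trans (le_max_left _ _), b.trans (le_max_left _ _), c.trans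
      (mul_le_mul_of_nonneg_right (le_max_left _ _) (norm_nonneg _))⟩
  · obtain ⟨a, b, c⟩ := h' _ (aux_neg hy)
      (by simpa using h0.trans_le (min_le_right _ _)) (-r) ⟨by linarith, by linarith [hr.1]⟩
    simp only [neg_neg, neg_zero] at a b c
    exact ⟨a.trans (le_max_right _ _), b.trans (le_max_right _ _), c.trans
      (mul_le_mul_of_nonneg_right (le_max_right _ _) (norm_nonneg _))⟩

theorem aux_group [ProperSpace E] {F : E → E} (hF : ContDiff ℝ 1 F) {χ : ℝ → E → E}
    (h0 : ∀ w, χ 0 w = w) (hχ : ∀ w t, HasDerivAt (fun s => χ s w) (F (χ t w)) t)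
    {s : ℝ} (hs : 0 ≤ s) (r : ℝ) (w : E) : χ s (χ r w) = χ (s + r) w := by
  obtain ⟨R, C, ε, hC, hε, h⟩ := aux_stab hF (hχ (χ r w)) s
  have h2 := (h (fun t => χ (t + r) w) (fun t => (hχ w (t + r)).comp_add_const t r)
    (by simpa [h0] using hε) s ⟨hs, le_rfl⟩).2.2
  simp only [zero_add, h0, sub_self, norm_zero, mul_zero] at h2
  have := norm_le_zero_iff.1 h2
  exact (sub_eq_zero.1 this).symm

theorem aux_linear [CompleteSpace E] {A : ℝ → E →L[ℝ] E} (hA : Continuous A) {K τ : ℝ}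
    (hτ : 0 ≤ τ) (hK : 0 ≤ K) (hKτ : 2 * K * τ ≤ 1) (hb : ∀ t ∈ Set.Icc 0 τ, ‖A t‖ ≤ K) :
    ∃ Φ : ℝ → E →L[ℝ] E, Φ 0 = ContinuousLinearMap.id ℝ E ∧
      ∀ t ∈ Set.Icc 0 τ, HasDerivWithinAt Φ ((A t).comp (Φ t)) (Set.Icc 0 τ) t := by
  have hp : IsPicardLindelof (fun t (X : E →L[ℝ] E) => (A t).comp X) (tmin := 0) (tmax := τ)
      ⟨0, le_rfl, hτ⟩ (ContinuousLinearMap.id ℝ E) 1 0 ⟨2 * K, by positivity⟩ ⟨K, hK⟩ := by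
    refine ⟨fun t ht => ?_, fun X _ => ?_, fun t ht X hX => ?_, ?_⟩
    · refine LipschitzOnWith.of_dist_le_mul fun X _ Y _ => ?_
      rw [dist_eq_norm, dist_eq_norm, ← ContinuousLinearMap.comp_sub]
      exact (ContinuousLinearMap.opNorm_comp_le _ _).trans
        (mul_le_mul_of_nonneg_right (hb t ht) (norm_nonneg _))
    · exact (hA.clm_comp continuous_const).continuousOn
    · refine (ContinuousLinearMap.opNorm_comp_le _ _).trans ?_
      rw [mem_closedBall_iff_norm] at hX
      have h1 := norm_add_le (X - ContinuousLinearMap.id ℝ E) (ContinuousLinearMap.id ℝ E)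
      rw [sub_add_cancel] at h1
      have h2 : ‖ContinuousLinearMap.id ℝ E‖ ≤ 1 := ContinuousLinearMap.norm_id_le
      have h3 : ‖X‖ ≤ 2 := by
        have : ((1 : ℝ≥0) : ℝ) = 1 := rfl
        linarith
      calc ‖A t‖ * ‖X‖ ≤ K * 2 := mul_le_mul (hb t ht) h3 (norm_nonneg _) hK
        _ = 2 * K := by ring
    · simp [hτ]
      exact hKτ
  exact hp.exists_eq_forall_mem_Icc_hasDerivWithinAt₀

theorem aux_step [ProperSpace E] [CompleteSpace E] {F : E → E} (hF : ContDiff ℝ 2 F)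
    {χ : ℝ → E → E}
    (h0 : ∀ w, χ 0 w = w) (hχ : ∀ w t, HasDerivAt (fun s => χ s w) (F (χ t w)) t)
    {K τ : ℝ} (hτ : 0 ≤ τ) (hK : 0 ≤ K) (hKτ : 2 * K * τ ≤ 1) (w : E)
    (hb : ∀ t ∈ Set.Icc 0 τ, ‖fderiv ℝ F (χ t w)‖ ≤ K) :
    DifferentiableAt ℝ (χ τ) w := by
  have hF1 : ContDiff ℝ 1 F := hF.of_le (by norm_num)
  have hc : ∀ w, Continuous fun s => χ s w :=
    fun w => continuous_iff_continuousAt.2 fun t => (hχ w t).continuousAt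
  have hA : Continuous fun t => fderiv ℝ F (χ t w) :=
    (hF.continuous_fderiv (by norm_num)).comp (hc w)
  obtain ⟨Φ, hΦ0, hΦ⟩ := aux_linear hA hτ hK hKτ hb
  obtain ⟨R, C, ε, hC, hε, h⟩ := aux_stab hF1 (hχ w) τ
  obtain ⟨M, hM, hq⟩ := aux_quad hF R
  set D := M * C ^ 2 with hD
  have hbound : ∀ w', ‖w' - w‖ < ε →
      ‖χ τ w' - χ τ w - Φ τ (w' - w)‖ ≤ gronwallBound 0 K D τ * ‖w' - w‖ ^ 2 := by
    intro w' hw'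
    have hs := h _ (hχ w') (by simpa [h0] using hw')
    simp only [h0] at hs
    have hΦd : ∀ t ∈ Set.Icc 0 τ, HasDerivWithinAt (fun r => Φ r (w' - w))
        (fderiv ℝ F (χ t w) (Φ t (w' - w))) (Set.Icc 0 τ) t := fun t ht => by
      simpa using! (hΦ t ht).clm_apply (hasDerivWithinAt_const t _ (w' - w))
    have hg := norm_le_gronwallBound_of_norm_deriv_right_le
      (f := fun r => χ r w' - χ r w - Φ r (w' - w))
      (f' := fun r => F (χ r w') - F (χ r w) - fderiv ℝ F (χ r w) (Φ r (w' - w)))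
      (δ := 0) (K := K) (ε := D * ‖w' - w‖ ^ 2) (a := 0) (b := τ)
      (((hc w').sub (hc w)).continuousOn.sub fun t ht => (hΦd t ht).continuousWithinAt)
      (fun t ht => ((hχ w' t).hasDerivWithinAt.sub (hχ w t).hasDerivWithinAt).sub
        ((hΦd t ⟨ht.1, ht.2.le⟩).mono_of_mem_nhdsWithin (Icc_mem_nhdsGE_of_mem ht)))
      (by simp [h0, hΦ0]) (fun t ht => ?_) τ ⟨hτ, le_rfl⟩
    · refine hg.trans (le_of_eq ?_)
      simp only [gronwallBound, sub_zero]
      split_ifs <;> ring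
    · have ht' : t ∈ Set.Icc 0 τ := ⟨ht.1, ht.2.le⟩
      obtain ⟨a1, a2, a3⟩ := hs t ht'
      have hq' := hq (χ t w) (by simpa using a1) (χ t w') (by simpa using a2)
      have e : F (χ t w') - F (χ t w) - fderiv ℝ F (χ t w) (Φ t (w' - w)) =
          fderiv ℝ F (χ t w) (χ t w' - χ t w - Φ t (w' - w)) +
          (F (χ t w') - F (χ t w) - fderiv ℝ F (χ t w) (χ t w' - χ t w)) := by
        rw [map_sub (fderiv ℝ F (χ t w)) (χ t w' - χ t w)]; abel
      simp only [e]
      refine (norm_add_le _ _).trans (add_le_add ?_ ?_)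
      · exact (ContinuousLinearMap.le_opNorm _ _).trans
          (mul_le_mul_of_nonneg_right (hb t ht') (norm_nonneg _))
      · refine hq'.trans ?_
        rw [hD, mul_assoc, ← mul_pow]
        gcongr
  have : HasFDerivAt (χ τ) (Φ τ) w := by
    rw [hasFDerivAt_iff_isLittleO]
    have hO : (fun w' => χ τ w' - χ τ w - Φ τ (w' - w)) =O[nhds w] fun w' => ‖w' - w‖ ^ 2 := by
      refine Asymptotics.IsBigO.of_bound (gronwallBound 0 K D τ) ?_
      filter_upwards [Metric.ball_mem_nhds w hε] with w' hw'
      rw [mem_ball_iff_norm] at hw'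
      simpa using hbound w' hw'
    refine hO.trans_isLittleO ?_
    exact Asymptotics.isLittleO_pow_sub_sub w one_lt_two
  exact this.differentiableAt

theorem aux_diff_nonneg [ProperSpace E] [CompleteSpace E] {F : E → E} (hF : ContDiff ℝ 2 F)
    {χ : ℝ → E → E}
    (h0 : ∀ w, χ 0 w = w) (hχ : ∀ w t, HasDerivAt (fun s => χ s w) (F (χ t w)) t)
    {T : ℝ} (hT : 0 ≤ T) (w : E) : DifferentiableAt ℝ (χ T) w := by
  have hF1 : ContDiff ℝ 1 F := hF.of_le (by norm_num)
  have hc : Continuous fun s => χ s w :=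
    continuous_iff_continuousAt.2 fun t => (hχ w t).continuousAt
  have hA : Continuous fun t => fderiv ℝ F (χ t w) :=
    (hF.continuous_fderiv (by norm_num)).comp hc
  obtain ⟨K, hK⟩ := (isCompact_Icc (a := (0 : ℝ)) (b := T)).exists_bound_of_continuousOn
    hA.continuousOn
  have hK0 : 0 ≤ K := (norm_nonneg _).trans (hK 0 ⟨le_rfl, hT⟩)
  obtain ⟨N, hN⟩ := exists_nat_gt (2 * K * T)
  have hNpos : (0 : ℝ) < N := lt_of_le_of_lt (by positivity) hN
  set τ := T / N with hτd
  have hτ : 0 ≤ τ := by positivity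
  have hNτ : N * τ = T := by rw [hτd]; field_simp
  have hKτ : 2 * K * τ ≤ 1 := by
    rw [hτd, ← mul_div_assoc, div_le_one hNpos]; exact hN.le
  have main : ∀ k : ℕ, k ≤ N → DifferentiableAt ℝ (χ (k * τ)) w := by
    intro k
    induction k with
    | zero =>
      intro _
      have : χ ((0 : ℕ) * τ) = id := by funext v; simp [h0]
      rw [this]; exact differentiableAt_id
    | succ k ih =>
      intro hk
      have hkN : ((k : ℝ) + 1) ≤ N := by exact_mod_cast hk
      have e : χ ((k + 1 : ℕ) * τ) = χ τ ∘ χ (k * τ) := by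
        funext v
        rw [Function.comp, aux_group hF1 h0 hχ hτ]
        congr 1; push_cast; ring
      rw [e]
      refine DifferentiableAt.comp w ?_ (ih (by omega))
      refine aux_step hF h0 hχ hτ hK0 hKτ _ fun t ht => ?_
      rw [aux_group hF1 h0 hχ ht.1]
      refine hK _ ⟨?_, ?_⟩
      · have := ht.1; positivity
      · rw [← hNτ]
        have := mul_le_mul_of_nonneg_right hkN hτ
        linarith [ht.2]
  have := main N le_rfl
  rwa [hNτ] at this

theorem aux_diff [ProperSpace E] [CompleteSpace E] {F : E → E} (hF : ContDiff ℝ 2 F)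
    {χ : ℝ → E → E}
    (h0 : ∀ w, χ 0 w = w) (hχ : ∀ w t, HasDerivAt (fun s => χ s w) (F (χ t w)) t)
    (T : ℝ) (w : E) : DifferentiableAt ℝ (χ T) w := by
  rcases le_total 0 T with hT | hT
  · exact aux_diff_nonneg hF h0 hχ hT w
  · have := aux_diff_nonneg (F := fun w => -F w) hF.neg (χ := fun s => χ (-s))
      (by simpa using h0) (fun w t => aux_neg (hχ w) t) (T := -T) (by linarith) w
    simpa using this

end AbstractFlow

section HamFacts

variable {n : ℕ}

theorem aux_ham_contDiff {a : Fin n → Fin n → En n → ℝ}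
    (ha : ∀ i j, ContDiff ℝ (⊤ : ℕ∞) (a i j)) : ContDiff ℝ 3 (ham a) := by
  have h3 : ∀ i j, ContDiff ℝ 3 (a i j) := fun i j =>
    (contDiff_infty.1 (ha i j)) 3
  unfold ham
  refine ContDiff.sum fun i _ => ContDiff.sum fun j _ => ?_
  have hi : ∀ k : Fin n, ContDiff ℝ 3 (fun w : En n × En n => w.2 k) := fun k =>
    (EuclideanSpace.proj k : En n →L[ℝ] ℝ).contDiff.comp contDiff_snd
  exact (((h3 i j).comp contDiff_fst).mul (hi i)).mul (hi j)

theorem aux_grad2 {H : En n × En n → ℝ} (hH : Differentiable ℝ H) (w : En n × En n) :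
    gradient (fun ζ => H (w.1, ζ)) w.2 = (InnerProductSpace.toDual ℝ (En n)).symm
      ((fderiv ℝ H w).comp (ContinuousLinearMap.inr ℝ (En n) (En n))) := by
  unfold gradient
  congr 1
  exact ((hH w).hasFDerivAt.comp w.2 (hasFDerivAt_prodMk_right w.1 w.2)).fderiv

theorem aux_grad1 {H : En n × En n → ℝ} (hH : Differentiable ℝ H) (w : En n × En n) :
    gradient (fun z => H (z, w.2)) w.1 = (InnerProductSpace.toDual ℝ (En n)).symm
      ((fderiv ℝ H w).comp (ContinuousLinearMap.inl ℝ (En n) (En n))) := by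
  unfold gradient
  congr 1
  exact ((hH w).hasFDerivAt.comp w.1 (hasFDerivAt_prodMk_left w.1 w.2)).fderiv

theorem aux_field_contDiff {a : Fin n → Fin n → En n → ℝ} (h : ContDiff ℝ 3 (ham a)) :
    ContDiff ℝ 2 (hamField a) := by
  have hd : Differentiable ℝ (ham a) := h.differentiable (by norm_num)
  have h1 : ContDiff ℝ 2 (fderiv ℝ (ham a)) := h.fderiv_right (by norm_num)
  have e : hamField a = fun w => ((InnerProductSpace.toDual ℝ (En n)).symm
      ((fderiv ℝ (ham a) w).comp (ContinuousLinearMap.inr ℝ (En n) (En n))),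
      -(InnerProductSpace.toDual ℝ (En n)).symm
      ((fderiv ℝ (ham a) w).comp (ContinuousLinearMap.inl ℝ (En n) (En n)))) := by
    funext w
    rw [← aux_grad2 hd, ← aux_grad1 hd]; rfl
  rw [e]
  refine ContDiff.prodMk ?_ (ContDiff.neg ?_)
  · exact (InnerProductSpace.toDual ℝ (En n)).symm.contDiff.comp (h1.clm_comp contDiff_const)
  · exact (InnerProductSpace.toDual ℝ (En n)).symm.contDiff.comp (h1.clm_comp contDiff_const)

theorem aux_fderiv {a : Fin n → Fin n → En n → ℝ} (h : Differentiable ℝ (ham a))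
    (w v : En n × En n) :
    fderiv ℝ (ham a) w v = ⟪(hamField a w).1, v.2⟫ - ⟪(hamField a w).2, v.1⟫ := by
  have e1 : (hamField a w).1 = gradient (fun ζ => ham a (w.1, ζ)) w.2 := rfl
  have e2 : (hamField a w).2 = -gradient (fun z => ham a (z, w.2)) w.1 := rfl
  rw [e1, e2, aux_grad1 h, aux_grad2 h, inner_neg_left, InnerProductSpace.toDual_symm_apply,
    InnerProductSpace.toDual_symm_apply, sub_neg_eq_add]
  simp only [ContinuousLinearMap.comp_apply, ← map_add]
  simp

end HamFacts

/-- The phase identity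
`∂_{ζᵢ} [∫₀ᵗ (a − ζ·d_ζ a)(χ_r(z,ζ)) dr] + ζ_t · ∂_{ζᵢ} z_t = 0`, where the
`ζᵢ`-derivative is in the initial frequency variable. -/
theorem statement11 {n : ℕ} (hn : 2 ≤ n) (μ : ℝ) (hμ : 1 ≤ μ) (Cα : ℕ → ℝ)
    (a : Fin n → Fin n → En n → ℝ) (ha : HamSetup μ Cα a)
    (χ : ℝ → En n × En n → En n × En n) (hχ : IsHamFlow a χ) :
    ∀ (t : ℝ) (z ζ : En n) (i : Fin n),
      fderiv ℝ (fun ζ' => ∫ r in (0 : ℝ)..t, hamSigma a (χ r (z, ζ'))) ζ (ev i) +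
        ⟪(χ t (z, ζ)).2, fderiv ℝ (fun ζ' => (χ t (z, ζ')).1) ζ (ev i)⟫ = 0 := by
  intro t z ζ i
  obtain ⟨h0, hχ⟩ := hχ
  have hH := aux_ham_contDiff ha.1
  have hF := aux_field_contDiff hH
  have hd : Differentiable ℝ (ham a) := hH.differentiable (by norm_num)
  have hσ : ∀ w, hamSigma a w = ham a w - ⟪w.2, (hamField a w).1⟫ := fun w => rfl
  have hσc : Continuous (hamSigma a) := by
    have e : hamSigma a = fun w => ham a w - ⟪w.2, (hamField a w).1⟫ := funext hσ
    rw [e]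
    exact hH.continuous.sub (continuous_snd.inner hF.continuous.fst)
  have hc : ∀ w, Continuous fun s => χ s w :=
    fun w => continuous_iff_continuousAt.2 fun t => (hχ w t).continuousAt
  have hz : DifferentiableAt ℝ (fun ζ' => (χ t (z, ζ')).1) ζ := by
    have h1 := aux_diff hF h0 hχ t (z, ζ)
    have h2 : DifferentiableAt ℝ (fun ζ' : En n => (z, ζ')) ζ := by fun_prop
    exact (DifferentiableAt.comp ζ h1 h2).fst
  set S : En n → ℝ := fun ζ' => ∫ r in (0 : ℝ)..t, hamSigma a (χ r (z, ζ')) with hS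
  set Z : En n → ℝ := fun ζ' => ⟪(χ t (z, ζ)).2, (χ t (z, ζ')).1⟫ with hZ
  have hZd : HasFDerivAt Z
      ((innerSL ℝ (χ t (z, ζ)).2).comp (fderiv ℝ (fun ζ' => (χ t (z, ζ')).1) ζ)) ζ :=
    (innerSL ℝ (χ t (z, ζ)).2).hasFDerivAt.comp ζ hz.hasFDerivAt
  obtain ⟨R, C, ε, hC, hε, hst⟩ := aux_stab2 (hF.of_le (by norm_num)) (hχ (z, ζ)) |t|
  obtain ⟨M, hM, hq⟩ := aux_quad (hH.of_le (by norm_num)) R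
  obtain ⟨K, hK⟩ := aux_lip (hF.of_le (by norm_num)) R
  have hbound : ∀ ζ', ‖ζ' - ζ‖ < ε →
      ‖S ζ' + Z ζ' - (S ζ + Z ζ)‖ ≤ (M + K) * C ^ 2 * |t| * ‖ζ' - ζ‖ ^ 2 := by
    intro ζ' hζ'
    have hn0 : ‖((z, ζ') : En n × En n) - (z, ζ)‖ = ‖ζ' - ζ‖ := by
      simp [Prod.norm_def]
    have hs := hst _ (hχ (z, ζ')) (by simpa only [h0, hn0] using hζ')
    simp only [h0, hn0] at hs
    have hint : ∀ w r, HasDerivAt (fun r => ∫ u in (0 : ℝ)..r, hamSigma a (χ u w))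
        (hamSigma a (χ r w)) r := fun w r =>
      intervalIntegral.integral_hasDerivAt_right
        ((hσc.comp (hc w)).intervalIntegrable _ _)
        ((hσc.comp (hc w)).stronglyMeasurableAtFilter _ _) (hσc.comp (hc w)).continuousAt
    have hfst : ∀ w r, HasDerivAt (fun r => (χ r w).1) (hamField a (χ r w)).1 r := fun w r =>
      (ContinuousLinearMap.fst ℝ (En n) (En n)).hasFDerivAt.comp_hasDerivAt r (hχ w r)
    have hsnd : ∀ w r, HasDerivAt (fun r => (χ r w).2) (hamField a (χ r w)).2 r := fun w r =>
      (ContinuousLinearMap.snd ℝ (En n) (En n)).hasFDerivAt.comp_hasDerivAt r (hχ w r)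
    have hder : ∀ r, HasDerivAt (fun r => (∫ u in (0 : ℝ)..r, hamSigma a (χ u (z, ζ'))) -
        (∫ u in (0 : ℝ)..r, hamSigma a (χ u (z, ζ))) +
          ⟪(χ r (z, ζ)).2, (χ r (z, ζ')).1 - (χ r (z, ζ)).1⟫)
        (hamSigma a (χ r (z, ζ')) - hamSigma a (χ r (z, ζ)) +
          (⟪(χ r (z, ζ)).2, (hamField a (χ r (z, ζ'))).1 - (hamField a (χ r (z, ζ))).1⟫ +
          ⟪(hamField a (χ r (z, ζ))).2, (χ r (z, ζ')).1 - (χ r (z, ζ)).1⟫)) r := fun r =>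
      ((hint _ r).sub (hint _ r)).add
        ((hsnd (z, ζ) r).inner ℝ ((hfst (z, ζ') r).sub (hfst (z, ζ) r)))
    have hmv := (convex_Icc (-|t|) |t|).norm_image_sub_le_of_norm_hasDerivWithin_le
      (C := (M + K) * C ^ 2 * ‖ζ' - ζ‖ ^ 2)
      (fun r _ => (hder r).hasDerivWithinAt) (fun r hr => ?_)
      (x := 0) (y := t) ⟨by simp, by simp⟩ ⟨neg_abs_le t, le_abs_self t⟩
    · simp only [intervalIntegral.integral_same, h0, sub_self, inner_zero_right, add_zero,
        sub_zero, Real.norm_eq_abs t] at hmv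
      have e : S ζ' + Z ζ' - (S ζ + Z ζ) = S ζ' - S ζ +
          ⟪(χ t (z, ζ)).2, (χ t (z, ζ')).1 - (χ t (z, ζ)).1⟫ := by
        simp only [hZ, inner_sub_right]; ring
      rw [e]
      refine hmv.trans (le_of_eq (by ring))
    · obtain ⟨b1, b2, b3⟩ := hs r hr
      have hq' := hq (χ r (z, ζ)) (by simpa using b1) (χ r (z, ζ')) (by simpa using b2)
      have hl' := hK.dist_le_mul (χ r (z, ζ')) (by simpa using b2)
        (χ r (z, ζ)) (by simpa using b1)
      rw [dist_eq_norm, dist_eq_norm] at hl'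
      generalize χ r (z, ζ') = x' at *
      generalize χ r (z, ζ) = x at *
      rw [aux_fderiv hd] at hq'
      have e : hamSigma a x' - hamSigma a x +
          (⟪x.2, (hamField a x').1 - (hamField a x).1⟫ + ⟪(hamField a x).2, x'.1 - x.1⟫) =
          (ham a x' - ham a x - (⟪(hamField a x).1, (x' - x).2⟫ -
            ⟪(hamField a x).2, (x' - x).1⟫)) -
          ⟪(x' - x).2, (hamField a x' - hamField a x).1⟫ := by
        rw [hσ, hσ]
        simp only [Prod.fst_sub, Prod.snd_sub, inner_sub_left, inner_sub_right]
        rw [real_inner_comm x.2 (hamField a x).1, real_inner_comm x'.2 (hamField a x).1]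
        ring
      rw [e]
      have h5 : ‖⟪(x' - x).2, (hamField a x' - hamField a x).1⟫‖ ≤ K * ‖x' - x‖ ^ 2 := by
        refine (norm_inner_le_norm _ _).trans ?_
        calc _ ≤ ‖x' - x‖ * (K * ‖x' - x‖) :=
              mul_le_mul (norm_snd_le _) ((norm_fst_le _).trans hl') (norm_nonneg _)
                (norm_nonneg _)
          _ = _ := by ring
      calc _ ≤ M * ‖x' - x‖ ^ 2 + K * ‖x' - x‖ ^ 2 :=
            (norm_sub_le _ _).trans (add_le_add hq' h5)
        _ = (M + K) * ‖x' - x‖ ^ 2 := by ring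
        _ ≤ (M + K) * (C * ‖ζ' - ζ‖) ^ 2 := by gcongr
        _ = _ := by ring
  have hSZ : HasFDerivAt (fun ζ' => S ζ' + Z ζ') (0 : En n →L[ℝ] ℝ) ζ := by
    rw [hasFDerivAt_iff_isLittleO]
    have hO : (fun ζ' => S ζ' + Z ζ' - (S ζ + Z ζ) - (0 : En n →L[ℝ] ℝ) (ζ' - ζ))
        =O[nhds ζ] fun ζ' => ‖ζ' - ζ‖ ^ 2 := by
      refine Asymptotics.IsBigO.of_bound ((M + K) * C ^ 2 * |t|) ?_
      filter_upwards [Metric.ball_mem_nhds ζ hε] with ζ' hζ'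
      rw [mem_ball_iff_norm] at hζ'
      simpa using hbound ζ' hζ'
    exact hO.trans_isLittleO (Asymptotics.isLittleO_pow_sub_sub ζ one_lt_two)
  have hSd : HasFDerivAt S (0 - (innerSL ℝ (χ t (z, ζ)).2).comp
      (fderiv ℝ (fun ζ' => (χ t (z, ζ')).1) ζ)) ζ := by
    have := hSZ.sub hZd
    refine this.congr_of_eventuallyEq (Filter.Eventually.of_forall fun ζ' => ?_)
    simp
  rw [hSd.fderiv]
  simp
end
end

section
/- Under the Hamiltonian flow setup, there exist constants c₀ > 0, ε > 0, and C ≥ 1, depending only on n and the constants C_α, such that if in addition ‖a^{ij} − δ_{ij}‖_{C²(ℝ^n)} ≤ c₀, then for all μ ≥ 1, all 0 < t ≤ ε μ^{-1}, every x ∈ ℝ^n and all ξ, η ∈ ℝ^n with μ/4 ≤ |ξ| ≤ 4μ and μ/4 ≤ |η| ≤ 4μ, one has C^{-1} t |ξ − η| ≤ | z_t(x,ξ) − z_t(x,η) | ≤ C t |ξ − η|. -/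
open MeasureTheory Complex Real
open scoped ENNReal NNReal RealInnerProductSpace

noncomputable section

/-- Coordinates are bounded by the norm. -/
lemma coord_le {n : ℕ} (v : En n) (i : Fin n) : |v i| ≤ ‖v‖ := by
  simpa using PiLp.norm_apply_le v i

lemma norm_le_of_inner {n : ℕ} (v : En n) {M : ℝ} (hM : 0 ≤ M)
    (h : ∀ k : En n, |⟪v, k⟫| ≤ M * ‖k‖) : ‖v‖ ≤ M := by
  have h1 := h v
  rw [real_inner_self_eq_norm_sq, abs_of_nonneg (by positivity)] at h1
  by_contra! hc
  nlinarith [norm_nonneg v]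

lemma inner_grad {n : ℕ} (f : En n → ℝ) (x k : En n) :
    ⟪gradient f x, k⟫ = fderiv ℝ f x k := by
  simp [gradient]

lemma double_sum_le {n : ℕ} (F : Fin n → Fin n → ℝ) (B : ℝ) (h : ∀ i j, |F i j| ≤ B) :
    |∑ i, ∑ j, F i j| ≤ (n : ℝ) ^ 2 * B := by
  calc |∑ i, ∑ j, F i j| ≤ ∑ i, ∑ j, |F i j| :=
        (Finset.abs_sum_le_sum_abs _ _).trans
          (Finset.sum_le_sum fun i _ => Finset.abs_sum_le_sum_abs _ _)
    _ ≤ ∑ _i : Fin n, ∑ _j : Fin n, B :=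
        Finset.sum_le_sum fun i _ => Finset.sum_le_sum fun j _ => h i j
    _ = _ := by simp; ring

lemma sum_delta {n : ℕ} (v w : En n) :
    ∑ i, ∑ j, (if i = j then (1 : ℝ) else 0) * v i * w j = ⟪v, w⟫ := by
  simp [PiLp.inner_apply, mul_comm]

lemma hasFDeriv_coord {n : ℕ} (i : Fin n) (v : En n) :
    HasFDerivAt (fun ζ : En n => ζ i) (EuclideanSpace.proj i : En n →L[ℝ] ℝ) v :=
  (EuclideanSpace.proj i : En n →L[ℝ] ℝ).hasFDerivAt

lemma fderiv_zeta {n : ℕ} (a : Fin n → Fin n → En n → ℝ) (z ζ k : En n) :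
    fderiv ℝ (fun ζ => ham a (z, ζ)) ζ k = ∑ i, ∑ j, a i j z * (k i * ζ j + ζ i * k j) := by
  have : HasFDerivAt (fun ζ => ham a (z, ζ)) (∑ i, ∑ j,
      ((a i j z * ζ i) • (EuclideanSpace.proj j : En n →L[ℝ] ℝ) +
        ζ j • (a i j z • (EuclideanSpace.proj i : En n →L[ℝ] ℝ)))) ζ := by
    unfold ham
    refine HasFDerivAt.fun_sum fun i _ => HasFDerivAt.fun_sum fun j _ => ?_
    exact ((hasFDeriv_coord i ζ).const_mul (a i j z)).mul (hasFDeriv_coord j ζ)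
  rw [this.fderiv]
  simp only [_root_.sum_apply, _root_.add_apply,
    _root_.smul_apply, smul_eq_mul]
  refine Finset.sum_congr rfl fun i _ => Finset.sum_congr rfl fun j _ => ?_
  change a i j z * ζ i * k j + ζ j * (a i j z * k i) = _
  ring

lemma fderiv_z {n : ℕ} (a : Fin n → Fin n → En n → ℝ) (ha : ∀ i j, Differentiable ℝ (a i j))
    (z ζ k : En n) :
    fderiv ℝ (fun z => ham a (z, ζ)) z k = ∑ i, ∑ j, fderiv ℝ (a i j) z k * ζ i * ζ j := by
  have : HasFDerivAt (fun z => ham a (z, ζ)) (∑ i, ∑ j,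
      (ζ j • (ζ i • fderiv ℝ (a i j) z))) z := by
    unfold ham
    refine HasFDerivAt.fun_sum fun i _ => HasFDerivAt.fun_sum fun j _ => ?_
    exact (((ha i j z).hasFDerivAt).mul_const (ζ i)).mul_const (ζ j)
  rw [this.fderiv]
  simp only [_root_.sum_apply, 
    _root_.smul_apply, smul_eq_mul]
  refine Finset.sum_congr rfl fun i _ => Finset.sum_congr rfl fun j _ => ?_
  ring

lemma ham_diff {n : ℕ} (a : Fin n → Fin n → En n → ℝ) (ha : ∀ i j, Differentiable ℝ (a i j)) :
    Differentiable ℝ (ham a) := by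
  unfold ham
  refine Differentiable.fun_sum fun i _ => Differentiable.fun_sum fun j _ => ?_
  have h1 : Differentiable ℝ (fun w : En n × En n => a i j w.1) :=
    (ha i j).comp differentiable_fst
  have h2 : ∀ i, Differentiable ℝ (fun w : En n × En n => w.2 i) := fun i =>
    ((EuclideanSpace.proj i : En n →L[ℝ] ℝ).differentiable).comp differentiable_snd
  exact (h1.mul (h2 i)).mul (h2 j)

/-- Conservation of energy. -/
lemma energy {n : ℕ} (a : Fin n → Fin n → En n → ℝ) (ha : ∀ i j, Differentiable ℝ (a i j))
    (χ : ℝ → En n × En n → En n × En n) (hχ : IsHamFlow a χ) (w : En n × En n) (t : ℝ) :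
    ham a (χ t w) = ham a w := by
  have hd : ∀ s, HasDerivAt (fun s => ham a (χ s w)) 0 s := by
    intro s
    have h1 := ((ham_diff a ha (χ s w)).hasFDerivAt).comp_hasDerivAt s (hχ.2 w s)
    suffices h0 : fderiv ℝ (ham a) (χ s w) (hamField a (χ s w)) = 0 by
      rw [h0] at h1
      exact h1
    set p := χ s w with hp
    have hz : HasFDerivAt (fun z => ham a (z, p.2))
        ((fderiv ℝ (ham a) p).comp (ContinuousLinearMap.inl ℝ (En n) (En n))) p.1 :=
      HasFDerivAt.comp p.1 (g := ham a) (f := fun z => (z, p.2))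
        (ham_diff a ha (p.1, p.2)).hasFDerivAt (hasFDerivAt_prodMk_left p.1 p.2)
    have hζ : HasFDerivAt (fun ζ => ham a (p.1, ζ))
        ((fderiv ℝ (ham a) p).comp (ContinuousLinearMap.inr ℝ (En n) (En n))) p.2 :=
      HasFDerivAt.comp p.2 (g := ham a) (f := fun ζ => (p.1, ζ))
        (ham_diff a ha (p.1, p.2)).hasFDerivAt (hasFDerivAt_prodMk_right p.1 p.2)
    have hsplit : hamField a p = ContinuousLinearMap.inl ℝ (En n) (En n) (hamField a p).1 +
        ContinuousLinearMap.inr ℝ (En n) (En n) (hamField a p).2 := by simp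
    rw [hsplit, map_add]
    have e1 : fderiv ℝ (ham a) p (ContinuousLinearMap.inl ℝ (En n) (En n) (hamField a p).1)
        = ⟪gradient (fun z => ham a (z, p.2)) p.1, (hamField a p).1⟫ := by
      rw [inner_grad, hz.fderiv]; rfl
    have e2 : fderiv ℝ (ham a) p (ContinuousLinearMap.inr ℝ (En n) (En n) (hamField a p).2)
        = ⟪gradient (fun ζ => ham a (p.1, ζ)) p.2, (hamField a p).2⟫ := by
      rw [inner_grad, hζ.fderiv]; rfl
    rw [e1, e2]
    simp only [hamField, inner_neg_right]
    rw [real_inner_comm]; ring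
  have := is_const_of_deriv_eq_zero (fun s => (hd s).differentiableAt) (fun s => (hd s).deriv) t 0
  simpa [hχ.1] using this

lemma ham_near {n : ℕ} (a : Fin n → Fin n → En n → ℝ) {c : ℝ}
    (hc : ∀ i j x, |a i j x - (if i = j then (1 : ℝ) else 0)| ≤ c) (w : En n × En n) :
    |ham a w - ‖w.2‖ ^ 2| ≤ (n : ℝ) ^ 2 * (c * ‖w.2‖ * ‖w.2‖) := by
  rw [← real_inner_self_eq_norm_sq, ← sum_delta, ham, ← Finset.sum_sub_distrib]
  simp_rw [← Finset.sum_sub_distrib]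
  refine double_sum_le _ _ fun i j => ?_
  rw [← sub_mul, ← sub_mul, abs_mul, abs_mul]
  have hc0 := (abs_nonneg _).trans (hc i j w.1)
  gcongr
  · exact hc i j w.1
  · exact coord_le _ _
  · exact coord_le _ _

lemma zeta_bound {n : ℕ} (a : Fin n → Fin n → En n → ℝ) (ha : ∀ i j, Differentiable ℝ (a i j))
    {c : ℝ} (hcn : (n : ℝ) ^ 2 * c ≤ 1 / 80)
    (hc : ∀ i j x, |a i j x - (if i = j then (1 : ℝ) else 0)| ≤ c)
    (χ : ℝ → En n × En n → En n × En n) (hχ : IsHamFlow a χ) (x ξ : En n) (μ : ℝ) (hμ : 1 ≤ μ)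
    (hξ : ‖ξ‖ ≤ 4 * μ) (t : ℝ) : ‖(χ t (x, ξ)).2‖ ≤ 8 * μ := by
  have h1 := abs_le.1 (ham_near a hc (χ t (x, ξ)))
  have h2 := abs_le.1 (ham_near a hc (x, ξ))
  rw [energy a ha χ hχ] at h1
  simp only at h2
  set y := ‖(χ t (x, ξ)).2‖
  have hy : 0 ≤ y := norm_nonneg _
  have h3 : (n : ℝ) ^ 2 * (c * y * y) ≤ 1 / 80 * y ^ 2 := by nlinarith [sq_nonneg y]
  have h4 : (n : ℝ) ^ 2 * (c * ‖ξ‖ * ‖ξ‖) ≤ 1 / 80 * ‖ξ‖ ^ 2 := by nlinarith [sq_nonneg ‖ξ‖]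
  have h5 : ‖ξ‖ ^ 2 ≤ (4 * μ) ^ 2 := by gcongr
  refine abs_le_of_sq_le_sq' ?_ (by linarith) |>.2
  nlinarith

lemma lip_a {n : ℕ} (f : En n → ℝ) (hf : Differentiable ℝ f) {c : ℝ}
    (hc : ∀ x, ‖fderiv ℝ f x‖ ≤ c) (x y : En n) : |f x - f y| ≤ c * ‖x - y‖ := by
  simpa using Convex.norm_image_sub_le_of_norm_fderiv_le (𝕜 := ℝ) (fun x _ => hf x)
    (fun x _ => hc x) convex_univ (Set.mem_univ y) (Set.mem_univ x)

lemma lip_da {n : ℕ} (f : En n → ℝ) (hf : ContDiff ℝ (⊤ : ℕ∞) f) {c : ℝ}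
    (hc : ∀ x, ‖iteratedFDeriv ℝ 2 f x‖ ≤ c) (x y : En n) :
    ‖fderiv ℝ f x - fderiv ℝ f y‖ ≤ c * ‖x - y‖ := by
  have hd : Differentiable ℝ (fderiv ℝ f) :=
    (hf.fderiv_right (m := 1) (by norm_cast)).differentiable (by norm_num)
  refine Convex.norm_image_sub_le_of_norm_fderiv_le (𝕜 := ℝ) (fun x _ => hd x)
    (fun x _ => ?_) convex_univ (Set.mem_univ y) (Set.mem_univ x)
  rw [← norm_iteratedFDeriv_one, norm_iteratedFDeriv_fderiv]
  exact hc x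

lemma field_fst {n : ℕ} (a : Fin n → Fin n → En n → ℝ) (ha : ∀ i j, Differentiable ℝ (a i j))
    {c μ : ℝ} (hc0 : 0 ≤ c) (hμ : 1 ≤ μ)
    (hc : ∀ i j x, |a i j x - (if i = j then (1 : ℝ) else 0)| ≤ c)
    (hc1 : ∀ i j x, ‖fderiv ℝ (a i j) x‖ ≤ c) (p q : En n × En n) (hq : ‖q.2‖ ≤ 8 * μ) :
    ‖(hamField a p).1 - (hamField a q).1 - (2 : ℝ) • (p.2 - q.2)‖ ≤
      (n : ℝ) ^ 2 * (2 * c * ‖p.2 - q.2‖ + 16 * c * μ * ‖p.1 - q.1‖) := by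
  refine norm_le_of_inner _ (by positivity) fun k => ?_
  have e : ⟪(hamField a p).1 - (hamField a q).1 - (2 : ℝ) • (p.2 - q.2), k⟫ =
      ∑ i, ∑ j, ((a i j p.1 - (if i = j then (1 : ℝ) else 0)) *
          (k i * (p.2 - q.2) j + (p.2 - q.2) i * k j) +
        (a i j p.1 - a i j q.1) * (k i * q.2 j + q.2 i * k j)) := by
    rw [inner_sub_left, inner_sub_left, real_inner_smul_left]
    simp only [hamField, inner_grad, fderiv_zeta]
    have : 2 * ⟪p.2 - q.2, k⟫ = ⟪k, p.2 - q.2⟫ + ⟪p.2 - q.2, k⟫ := by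
      rw [real_inner_comm]; ring
    rw [this, ← sum_delta, ← sum_delta]
    simp only [← Finset.sum_sub_distrib, ← Finset.sum_add_distrib]
    refine Finset.sum_congr rfl fun i _ => Finset.sum_congr rfl fun j _ => ?_
    simp only [PiLp.sub_apply]
    ring
  rw [e, mul_assoc]
  refine double_sum_le _ _ fun i j => ?_
  have b : ∀ (v : En n), |k i * v j + v i * k j| ≤ 2 * ‖v‖ * ‖k‖ := by
    intro v
    have h1 : |k i * v j| ≤ ‖k‖ * ‖v‖ := by
      rw [abs_mul]; gcongr <;> exact coord_le _ _
    have h2 : |v i * k j| ≤ ‖v‖ * ‖k‖ := by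
      rw [abs_mul]; gcongr <;> exact coord_le _ _
    have := abs_add_le (k i * v j) (v i * k j)
    linarith
  refine (abs_add_le _ _).trans ?_
  rw [abs_mul, abs_mul]
  have h1 : |a i j p.1 - (if i = j then (1 : ℝ) else 0)| *
      |k i * (p.2 - q.2) j + (p.2 - q.2) i * k j| ≤ c * (2 * ‖p.2 - q.2‖ * ‖k‖) := by
    gcongr
    · exact hc i j _
    · exact b _
  have h2 : |a i j p.1 - a i j q.1| * |k i * q.2 j + q.2 i * k j| ≤
      (c * ‖p.1 - q.1‖) * (2 * (8 * μ) * ‖k‖) := by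
    gcongr
    · exact lip_a _ (ha i j) (hc1 i j) _ _
    · exact (b _).trans (by gcongr)
  linarith

lemma field_snd {n : ℕ} (a : Fin n → Fin n → En n → ℝ) (ha : ∀ i j, ContDiff ℝ (⊤ : ℕ∞) (a i j))
    {c μ : ℝ} (hc0 : 0 ≤ c) (hμ : 1 ≤ μ)
    (hc1 : ∀ i j x, ‖fderiv ℝ (a i j) x‖ ≤ c)
    (hc2 : ∀ i j x, ‖iteratedFDeriv ℝ 2 (a i j) x‖ ≤ c)
    (p q : En n × En n) (hp : ‖p.2‖ ≤ 8 * μ) (hq : ‖q.2‖ ≤ 8 * μ) :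
    ‖(hamField a p).2 - (hamField a q).2‖ ≤
      (n : ℝ) ^ 2 * (64 * c * μ ^ 2 * ‖p.1 - q.1‖ + 16 * c * μ * ‖p.2 - q.2‖) := by
  have had : ∀ i j, Differentiable ℝ (a i j) := fun i j => (ha i j).differentiable (by simp)
  rw [norm_sub_rev]
  refine norm_le_of_inner _ (by positivity) fun k => ?_
  have e : ⟪(hamField a q).2 - (hamField a p).2, k⟫ =
      ∑ i, ∑ j, ((fderiv ℝ (a i j) p.1 - fderiv ℝ (a i j) q.1) k * (p.2 i * p.2 j) +
        fderiv ℝ (a i j) q.1 k * ((p.2 - q.2) i * p.2 j + q.2 i * (p.2 - q.2) j)) := by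
    rw [inner_sub_left]
    simp only [hamField, inner_neg_left, inner_grad, fderiv_z a had]
    rw [neg_sub_neg]
    simp only [← Finset.sum_sub_distrib]
    refine Finset.sum_congr rfl fun i _ => Finset.sum_congr rfl fun j _ => ?_
    simp only [PiLp.sub_apply, _root_.sub_apply]
    ring
  rw [e, mul_assoc]
  refine double_sum_le _ _ fun i j => ?_
  have cp := fun i => (coord_le p.2 i).trans hp
  have cq := fun i => (coord_le q.2 i).trans hq
  have h1 : |(fderiv ℝ (a i j) p.1 - fderiv ℝ (a i j) q.1) k * (p.2 i * p.2 j)| ≤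
      (c * ‖p.1 - q.1‖ * ‖k‖) * ((8 * μ) * (8 * μ)) := by
    rw [abs_mul, abs_mul]
    gcongr
    · exact (ContinuousLinearMap.le_opNorm _ k).trans
        (mul_le_mul_of_nonneg_right (lip_da _ (ha i j) (hc2 i j) _ _) (norm_nonneg k))
    · exact cp i
    · exact cp j
  have h2 : |fderiv ℝ (a i j) q.1 k * ((p.2 - q.2) i * p.2 j + q.2 i * (p.2 - q.2) j)| ≤
      (c * ‖k‖) * (‖p.2 - q.2‖ * (8 * μ) + (8 * μ) * ‖p.2 - q.2‖) := by
    rw [abs_mul]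
    gcongr
    · exact (ContinuousLinearMap.le_opNorm _ k).trans (mul_le_mul_of_nonneg_right (hc1 i j _) (norm_nonneg k))
    · refine (abs_add_le _ _).trans ?_
      rw [abs_mul, abs_mul]
      gcongr
      · exact coord_le _ _
      · exact cp j
      · exact cq i
      · exact coord_le _ _
  refine (abs_add_le _ _).trans ?_
  linarith

/-- The abstract comparison argument for the separation `(Z, W)` of two trajectories. -/
lemma separation {E : Type*} [NormedAddCommGroup E] [NormedSpace ℝ E]
    (Z W Z' W' : ℝ → E) (μ t : ℝ) (hμ : 1 ≤ μ) (ht : 0 < t) (htμ : t * μ ≤ 1 / 10)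
    (hZ : ∀ s, HasDerivAt Z (Z' s) s) (hW : ∀ s, HasDerivAt W (W' s) s) (hZ0 : Z 0 = 0)
    (h1 : ∀ s, ‖Z' s - (2 : ℝ) • W s‖ ≤ 1 / 80 * (2 * ‖W s‖ + 16 * μ * ‖Z s‖))
    (h2 : ∀ s, ‖W' s‖ ≤ 1 / 80 * (64 * μ ^ 2 * ‖Z s‖ + 16 * μ * ‖W s‖)) :
    ‖Z t - t • (2 : ℝ) • W 0‖ ≤ t * ‖W 0‖ := by
  have hμ0 : 0 < μ := by linarith
  set f : ℝ → E × E := fun s => (μ • Z s, W s) with hf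
  have hfd : ∀ s, HasDerivAt f (μ • Z' s, W' s) s := fun s =>
    ((hZ s).const_smul μ).prodMk (hW s)
  have fZ : ∀ s, μ * ‖Z s‖ ≤ ‖f s‖ := fun s => by
    have := norm_fst_le (f s)
    rwa [hf, norm_smul, Real.norm_of_nonneg hμ0.le] at this
  have fW : ∀ s, ‖W s‖ ≤ ‖f s‖ := fun s => norm_snd_le (f s)
  have hW'f : ∀ s, ‖W' s‖ ≤ μ * ‖f s‖ := fun s => by
    have := h2 s
    nlinarith [fZ s, fW s]
  have hZ'f : ∀ s, ‖Z' s - (2 : ℝ) • W s‖ ≤ 18 / 80 * ‖f s‖ := fun s => by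
    have := h1 s
    nlinarith [fZ s, fW s]
  have hf' : ∀ s, ‖((μ • Z' s, W' s) : E × E)‖ ≤ 3 * μ * ‖f s‖ + 0 := fun s => by
    rw [Prod.norm_mk]
    refine max_le ?_ ?_
    · rw [norm_smul, Real.norm_of_nonneg hμ0.le]
      have e1 : ‖Z' s‖ ≤ ‖Z' s - (2 : ℝ) • W s‖ + ‖(2 : ℝ) • W s‖ := by
        simpa using norm_add_le (Z' s - (2 : ℝ) • W s) ((2 : ℝ) • W s)
      rw [norm_smul, Real.norm_of_nonneg (by norm_num : (0 : ℝ) ≤ 2)] at e1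
      have e2 : ‖Z' s‖ ≤ 3 * ‖f s‖ := by
        linarith [hZ'f s, fW s, norm_nonneg (f s)]
      nlinarith
    · have := hW'f s
      nlinarith [norm_nonneg (f s)]
  have hf0 : ‖f 0‖ = ‖W 0‖ := by simp [hf, hZ0]
  have G : ∀ s ∈ Set.Icc 0 t, ‖f s‖ ≤ 2 * ‖W 0‖ := by
    intro s hs
    have g := norm_le_gronwallBound_of_norm_deriv_right_le (f := f)
      (f' := fun s => (μ • Z' s, W' s)) (δ := ‖W 0‖) (K := 3 * μ) (ε := 0) (a := 0) (b := t)
      (fun s _ => (hfd s).continuousAt.continuousWithinAt)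
      (fun s _ => (hfd s).hasDerivWithinAt) hf0.le (fun s _ => hf' s) s hs
    rw [gronwallBound_ε0, sub_zero] at g
    have he : Real.exp (3 * μ * s) ≤ 2 := by
      have : 3 * μ * s ≤ 3 / 10 := by nlinarith [hs.2]
      have hl := Real.log_two_gt_d9
      rw [← Real.le_log_iff_exp_le (by norm_num)]
      linarith
    nlinarith [norm_nonneg (W 0)]
  have D : ∀ s ∈ Set.Icc 0 t, ‖W s - W 0‖ ≤ 2 / 10 * ‖W 0‖ := by
    intro s hs
    have := norm_image_sub_le_of_norm_deriv_le_segment' (f := W) (f' := W') (a := 0) (b := t)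
      (C := 2 * μ * ‖W 0‖) (fun s _ => (hW s).hasDerivWithinAt)
      (fun s hs => (hW'f s).trans (by nlinarith [G s ⟨hs.1, hs.2.le⟩])) s hs
    refine this.trans ?_
    have : μ * s ≤ 1 / 10 := by nlinarith [hs.2]
    nlinarith [norm_nonneg (W 0)]
  have hg : ∀ s, HasDerivAt (fun s => Z s - s • (2 : ℝ) • W 0) (Z' s - (2 : ℝ) • W 0) s := by
    intro s
    have := (hZ s).sub ((hasDerivAt_id s).smul_const ((2 : ℝ) • W 0))
    rw [one_smul] at this
    exact this
  have := norm_image_sub_le_of_norm_deriv_le_segment' (f := fun s => Z s - s • (2 : ℝ) • W 0)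
    (f' := fun s => Z' s - (2 : ℝ) • W 0) (a := 0) (b := t)
    (C := ‖W 0‖) (fun s _ => (hg s).hasDerivWithinAt)
    (fun s hs => by
      have hs' : s ∈ Set.Icc 0 t := ⟨hs.1, hs.2.le⟩
      have e : Z' s - (2 : ℝ) • W 0 = (Z' s - (2 : ℝ) • W s) + (2 : ℝ) • (W s - W 0) := by
        rw [smul_sub]; abel
      rw [e]
      refine (norm_add_le _ _).trans ?_
      rw [norm_smul, Real.norm_of_nonneg (by norm_num : (0 : ℝ) ≤ 2)]
      linarith [hZ'f s, G s hs', D s hs', norm_nonneg (W 0)]) t ⟨ht.le, le_rfl⟩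
  simp only [hZ0, zero_smul, sub_zero] at this
  linarith

/-- Comparability of the spatial separation of Hamiltonian trajectories
with the frequency separation: if in addition `‖aⁱʲ − δᵢⱼ‖_{C²} ≤ c₀`, then for
`0 < t ≤ ε μ⁻¹` and `ξ, η` in the annulus `{μ/4 ≤ |·| ≤ 4μ}`,
`C⁻¹ t |ξ − η| ≤ |z_t(x,ξ) − z_t(x,η)| ≤ C t |ξ − η|`. -/
theorem statement13 {n : ℕ} (hn : 2 ≤ n) (Cα : ℕ → ℝ) :
    ∃ c₀ : ℝ, 0 < c₀ ∧ ∃ ε : ℝ, 0 < ε ∧ ∃ C : ℝ, 1 ≤ C ∧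
      ∀ (μ : ℝ), 1 ≤ μ →
      ∀ (a : Fin n → Fin n → En n → ℝ), HamSetup μ Cα a →
        (∀ i j x, |a i j x - (if i = j then (1 : ℝ) else 0)| + ‖fderiv ℝ (a i j) x‖ +
          ‖iteratedFDeriv ℝ 2 (a i j) x‖ ≤ c₀) →
      ∀ (χ : ℝ → En n × En n → En n × En n), IsHamFlow a χ →
      ∀ (t : ℝ), 0 < t → t ≤ ε * μ⁻¹ →
      ∀ (x ξ η : En n), μ / 4 ≤ ‖ξ‖ → ‖ξ‖ ≤ 4 * μ → μ / 4 ≤ ‖η‖ → ‖η‖ ≤ 4 * μ →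
        C⁻¹ * t * ‖ξ - η‖ ≤ ‖(χ t (x, ξ)).1 - (χ t (x, η)).1‖ ∧
          ‖(χ t (x, ξ)).1 - (χ t (x, η)).1‖ ≤ C * t * ‖ξ - η‖ := by
  have hn0 : (0 : ℝ) < n := by exact_mod_cast (by omega : 0 < n)
  refine ⟨1 / (80 * (n : ℝ) ^ 2), by positivity, 1 / 10, by norm_num, 3, by norm_num, ?_⟩
  intro μ hμ a hS hc χ hχ t ht htε x ξ η _ hξ _ hη
  set c : ℝ := 1 / (80 * (n : ℝ) ^ 2) with hcdef
  have hcn : (n : ℝ) ^ 2 * c = 1 / 80 := by rw [hcdef]; field_simp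
  have hc0 : 0 ≤ c := by positivity
  have hμ0 : 0 < μ := by linarith
  have ha := hS.1
  have had : ∀ i j, Differentiable ℝ (a i j) := fun i j => (ha i j).differentiable (by simp)
  have b0 : ∀ i j x, |a i j x - (if i = j then (1 : ℝ) else 0)| ≤ c := fun i j x => by
    linarith [hc i j x, norm_nonneg (fderiv ℝ (a i j) x),
      norm_nonneg (iteratedFDeriv ℝ 2 (a i j) x)]
  have b1 : ∀ i j x, ‖fderiv ℝ (a i j) x‖ ≤ c := fun i j x => by
    linarith [hc i j x, abs_nonneg (a i j x - (if i = j then (1 : ℝ) else 0)),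
      norm_nonneg (iteratedFDeriv ℝ 2 (a i j) x)]
  have b2 : ∀ i j x, ‖iteratedFDeriv ℝ 2 (a i j) x‖ ≤ c := fun i j x => by
    linarith [hc i j x, abs_nonneg (a i j x - (if i = j then (1 : ℝ) else 0)),
      norm_nonneg (fderiv ℝ (a i j) x)]
  have zξ := zeta_bound a had hcn.le b0 χ hχ x ξ μ hμ hξ
  have zη := zeta_bound a had hcn.le b0 χ hχ x η μ hμ hη
  have htμ : t * μ ≤ 1 / 10 := by
    have := mul_le_mul_of_nonneg_right htε hμ0.le
    rwa [mul_assoc, inv_mul_cancel₀ hμ0.ne', mul_one] at this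
  have hd_fst : ∀ w s, HasDerivAt (fun s => (χ s w).1) (hamField a (χ s w)).1 s := fun w s =>
    (ContinuousLinearMap.fst ℝ (En n) (En n)).hasFDerivAt.comp_hasDerivAt s (hχ.2 w s)
  have hd_snd : ∀ w s, HasDerivAt (fun s => (χ s w).2) (hamField a (χ s w)).2 s := fun w s =>
    (ContinuousLinearMap.snd ℝ (En n) (En n)).hasFDerivAt.comp_hasDerivAt s (hχ.2 w s)
  have key := separation (fun s => (χ s (x, ξ)).1 - (χ s (x, η)).1)
    (fun s => (χ s (x, ξ)).2 - (χ s (x, η)).2)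
    (fun s => (hamField a (χ s (x, ξ))).1 - (hamField a (χ s (x, η))).1)
    (fun s => (hamField a (χ s (x, ξ))).2 - (hamField a (χ s (x, η))).2) μ t hμ ht htμ
    (fun s => (hd_fst _ s).sub (hd_fst _ s)) (fun s => (hd_snd _ s).sub (hd_snd _ s))
    (by simp [hχ.1])
    (fun s => (field_fst a had hc0 hμ b0 b1 _ _ (zη s)).trans
      (by rw [← hcn]; exact le_of_eq (by ring)))
    (fun s => (field_snd a ha hc0 hμ b1 b2 _ _ (zξ s) (zη s)).trans
      (by rw [← hcn]; exact le_of_eq (by ring)))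
  simp only [hχ.1] at key
  set Z := (χ t (x, ξ)).1 - (χ t (x, η)).1
  have hv : ‖t • (2 : ℝ) • (ξ - η)‖ = 2 * t * ‖ξ - η‖ := by
    rw [norm_smul, norm_smul, Real.norm_of_nonneg ht.le,
      Real.norm_of_nonneg (by norm_num : (0 : ℝ) ≤ 2)]
    ring
  have k1 := norm_sub_norm_le Z (t • (2 : ℝ) • (ξ - η))
  have k2 := norm_sub_norm_le (t • (2 : ℝ) • (ξ - η)) Z
  rw [norm_sub_rev _ Z] at k2
  rw [hv] at k1 k2
  have : 0 ≤ t * ‖ξ - η‖ := by positivity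
  constructor <;> linarith
end
end
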